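/- Define D_r f(r) = f'(r) + (2/r)·f(r) and the operators 𝒟_0 = id, 𝒟_{2m} = (∂_r D_r)^m, 𝒟_{2m+1} = D_r (∂_r D_r)^m for m ≥ 0, and 𝒟̄_0 = id, 𝒟̄_i = 𝒟_{i-1} ∘ ∂_r for i ≥ 1. Then for every positive integer i, every smooth X : (0,1) → ℝ, and every r ∈ (0,1): (𝒟_i X)(r) = r · ( d/dr [ 𝒟̄_{i-1}(X/r) ] )(r) + (i+2) · (𝒟̄_{i-1}(X/r))(r), where X/r denotes the function r ↦ X(r)/r. -/

import Mathlib

/-- The radial divergence `D_r f (r) = f'(r) + (2/r) f(r)`. -/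
noncomputable def Dr (f : ℝ → ℝ) : ℝ → ℝ := fun r => deriv f r + (2 / r) * f r

/-- The alternating high-order operators: `𝒟_0 = id`, `𝒟_{2m} = (∂_r D_r)^m`,
`𝒟_{2m+1} = D_r (∂_r D_r)^m`. -/
noncomputable def Dcal : ℕ → (ℝ → ℝ) → ℝ → ℝ
  | 0 => fun f => f
  | j + 1 => fun f => if j % 2 = 0 then Dr (Dcal j f) else deriv (Dcal j f)

/-- `𝒟̄_0 = id`, `𝒟̄_i = 𝒟_{i-1} ∘ ∂_r` for `i ≥ 1`. -/
noncomputable def Dbar : ℕ → (ℝ → ℝ) → ℝ → ℝ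
  | 0 => fun f => f
  | i + 1 => fun f => Dcal i (deriv f)

/-!
The Euler operators `r ∂_r + c` satisfy `A (r ∂_r + c) = (r ∂_r + c + 1) A` for both `A = ∂_r` and
`A = D_r`, since either one lowers the degree of a homogeneous function by one. As
`D_r X = (r ∂_r + 3) (X / r)`, moving the remaining `i - 1` factors of `𝒟_i` past `r ∂_r + 3`
raises the constant to `i + 2`, and these factors, alternating from `∂_r` on, compose to `𝒟̄_{i-1}`.
-/

open scoped Topology

theorem Dcal_succ (n : ℕ) (f : ℝ → ℝ) :
    Dcal (n + 1) f = if n % 2 = 0 then Dr (Dcal n f) else deriv (Dcal n f) := rfl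

-- The condition is not simplified to `n % 2 = 1`, so that it matches `Dcal_succ` at `n + 1`.
theorem Dbar_succ (n : ℕ) (f : ℝ → ℝ) :
    Dbar (n + 1) f = if (n + 1) % 2 = 0 then Dr (Dbar n f) else deriv (Dbar n f) := by
  cases n with
  | zero => rfl
  | succ k => simp only [Dbar, Dcal_succ, Nat.add_assoc, Nat.add_mod_right, Nat.reduceAdd]

/-- The shifted Euler operator `r ∂_r + c`. The right-hand side of the identity for `𝒟_i X` is
`r ∂_r + (i + 2)` applied to `𝒟̄_{i-1}(X/r)`. -/
noncomputable def shiftedEuler (c : ℝ) (f : ℝ → ℝ) : ℝ → ℝ := fun r => r * deriv f r + c * f r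

section

variable {f g : ℝ → ℝ} {r : ℝ} {m : WithTop ℕ∞}

theorem Dr_eq_of_eventuallyEq (h : f =ᶠ[𝓝 r] g) : Dr f r = Dr g r := by
  simp only [Dr, h.deriv_eq, h.eq_of_nhds]

theorem hasDerivAt_Dr (hr : r ≠ 0) (hf : DifferentiableAt ℝ f r)
    (hf' : DifferentiableAt ℝ (deriv f) r) :
    HasDerivAt (Dr f) (deriv (deriv f) r + 2 / r * deriv f r - 2 / r ^ 2 * f r) r := by
  have h_div : HasDerivAt (fun x : ℝ => 2 / x) (-2 / r ^ 2) r := by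
    simpa using (hasDerivAt_const r (2 : ℝ)).fun_div (hasDerivAt_id' r) hr
  exact (hf'.hasDerivAt.add (h_div.mul hf.hasDerivAt)).congr_deriv (by ring)

theorem Dr_eq_shiftedEuler_div (hr : r ≠ 0) (hf : DifferentiableAt ℝ f r) :
    Dr f r = shiftedEuler 3 (fun x => f x / x) r := by
  have h_div : HasDerivAt (fun x => f x / x) ((deriv f r * r - f r * 1) / r ^ 2) r :=
    hf.hasDerivAt.fun_div (hasDerivAt_id' r) hr
  simp only [Dr, shiftedEuler, h_div.deriv]
  field_simp
  ring

theorem deriv_shiftedEuler (c : ℝ) (hf : DifferentiableAt ℝ f r)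
    (hf' : DifferentiableAt ℝ (deriv f) r) :
    deriv (shiftedEuler c f) r = shiftedEuler (c + 1) (deriv f) r := by
  have h : HasDerivAt (shiftedEuler c f)
      (1 * deriv f r + r * deriv (deriv f) r + c * deriv f r) r :=
    ((hasDerivAt_id' r).mul hf'.hasDerivAt).add (hf.hasDerivAt.const_mul c)
  rw [h.deriv, shiftedEuler]
  ring

theorem Dr_shiftedEuler (c : ℝ) (hr : r ≠ 0) (hf : DifferentiableAt ℝ f r)
    (hf' : DifferentiableAt ℝ (deriv f) r) :
    Dr (shiftedEuler c f) r = shiftedEuler (c + 1) (Dr f) r := by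
  simp only [Dr, deriv_shiftedEuler c hf hf']
  simp only [shiftedEuler, (hasDerivAt_Dr hr hf hf').deriv, Dr]
  field_simp
  ring

theorem contDiffAt_Dr (hr : r ≠ 0) (hf : ContDiffAt ℝ (m + 1) f r) : ContDiffAt ℝ m (Dr f) r :=
  (hf.derivWithin le_rfl).add
    ((contDiffAt_const.div contDiffAt_id hr).mul (hf.of_le le_self_add))

theorem contDiffAt_Dbar (hr : r ≠ 0) (n : ℕ) (hf : ContDiffAt ℝ (m + n) f r) :
    ContDiffAt ℝ m (Dbar n f) r := by
  induction n generalizing m with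
  | zero => simpa only [Dbar, Nat.cast_zero, add_zero] using hf
  | succ n ih =>
    have h : ContDiffAt ℝ (m + 1) (Dbar n f) r :=
      ih (by rwa [add_assoc, add_comm 1, ← Nat.cast_succ])
    rw [Dbar_succ]
    split_ifs
    · exact contDiffAt_Dr hr h
    · exact h.derivWithin le_rfl

theorem Dcal_eq_Dbar_of_div_general (n : ℕ) (hr : r ≠ 0) (hf : ContDiffAt ℝ (n + 1 : ℕ) f r) :
    Dcal (n + 1) f r = shiftedEuler ((n + 1 : ℕ) + 2) (Dbar n (fun x => f x / x)) r := by
  induction n generalizing r with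
  | zero =>
    have h_coeff : ((0 + 1 : ℕ) : ℝ) + 2 = 3 := by norm_num
    rw [h_coeff]
    exact Dr_eq_shiftedEuler_div hr (hf.differentiableAt (by simp))
  | succ n ih =>
    have h_coeff : ((n + 1 + 1 : ℕ) : ℝ) + 2 = ((n + 1 : ℕ) + 2 : ℝ) + 1 := by push_cast; ring
    rw [Dcal_succ, Dbar_succ, h_coeff]
    set W := Dbar n (fun x => f x / x)
    have hW : ContDiffAt ℝ (1 + 1) W r :=
      contDiffAt_Dbar hr n ((hf.div contDiffAt_id hr).of_le (by norm_cast; lia))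
    have hW_diff : DifferentiableAt ℝ W r := hW.differentiableAt (by simp)
    have hW'_diff : DifferentiableAt ℝ (deriv W) r :=
      (hW.derivWithin le_rfl).differentiableAt one_ne_zero
    have ih_nhds : Dcal (n + 1) f =ᶠ[𝓝 r] shiftedEuler ((n + 1 : ℕ) + 2) W := by
      filter_upwards [isOpen_ne.mem_nhds hr, hf.eventually (by simp)] with x hx hfx
      exact ih hx (hfx.of_le (by norm_cast; lia))
    split_ifs
    · rw [Dr_eq_of_eventuallyEq ih_nhds, Dr_shiftedEuler _ hr hW_diff hW'_diff]
    · rw [ih_nhds.deriv_eq, deriv_shiftedEuler _ hW_diff hW'_diff]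

end

/-- Identity (A.399) of Lemma A.1:
`𝒟_i X = r ∂_r 𝒟̄_{i-1}(X/r) + (i+2) 𝒟̄_{i-1}(X/r)`. -/
theorem Dcal_eq_Dbar_of_div (i : ℕ) (hi : 0 < i) (X : ℝ → ℝ)
    (hX : ContDiffOn ℝ (⊤ : ℕ∞) X (Set.Ioo 0 1)) :
    ∀ r ∈ Set.Ioo (0:ℝ) 1,
      Dcal i X r =
        r * deriv (Dbar (i - 1) (fun x => X x / x)) r +
          ((i : ℝ) + 2) * Dbar (i - 1) (fun x => X x / x) r := by
  obtain ⟨n, rfl⟩ := Nat.exists_eq_add_one.2 hi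
  exact fun r hr => Dcal_eq_Dbar_of_div_general n hr.1.ne'
    ((hX.contDiffAt (isOpen_Ioo.mem_nhds hr)).of_le (mod_cast le_top))
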